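/- Let k ≥ 1 and e ≥ 0 be integers. In the tensor product R(k,2^e) ⊗ R(k,2^e) over ZMod 2, the element (z_1·z_2·…·z_k)^{2^{e+1}−1} is nonzero, where z_i = x_i ⊗ 1 + 1 ⊗ x_i. -/

import Mathlib

/-!
Write `m = 2 ^ e`, `n = m + k`, and index the variables from `0`, so that the relations of `R(k, m)`
read `h_{n-j}(x_0, …, x_j) = 0` for `j < k`.

The top monomial `∏ x_j ^ (n-j-1)` does not vanish: adjoining the `x_j` one at a time, the relation
`h_{n-j}(x_0, …, x_j) = 0` is a monic equation of degree `n - j` for `x_j` over the ring already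
built, so the new ring is free over the old one with `x_j ^ (n-j-1)` in a basis (`exists_model`).

On the other hand `P_j = ∏_{i<j} x_i ^ (n-i-1)` annihilates `x_0, …, x_{j-1}`: multiplied by `P_j`,
the relation for `x_j` collapses to `P_j * x_j ^ (n-j) = 0` (`prefix_kill`). With `u = x_j ⊗ 1`,
`v = 1 ⊗ x_j`, `N = n - j - 1`, both `u ^ (N+1)` and `v ^ (N+1)` are therefore killed by
`P_j ⊗ P_j`, and since `(u + v) ^ (2m-1) = (u ^ m + v ^ m) * (u + v) ^ (m-1)` in characteristic two,
`u ^ (N-m+1) * v ^ (N-m) * (u + v) ^ (2m-1)` becomes `u ^ N * v ^ N` after multiplication by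
`P_j ⊗ P_j` (`local_step`). Thus a suitable multiple of `(z_1 ⋯ z_k) ^ (2m-1)` is the tensor square
of the top monomial, which is nonzero (`core_ne_zero`).
-/

open scoped TensorProduct

/-- Complete homogeneous symmetric polynomial of degree `d` in a list of elements
of a commutative (semi)ring: `h_d(l)`. -/
noncomputable def completeHomog {R : Type*} [CommSemiring R] : List R → ℕ → R
  | [], 0 => 1
  | [], _ + 1 => 0
  | x :: l, d => ∑ t ∈ Finset.range (d + 1), x ^ t * completeHomog l (d - t)

/-- Elementary symmetric polynomial of degree `d` in a list of elements: `e_d(l)`. -/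
noncomputable def elemSymm {R : Type*} [CommSemiring R] : List R → ℕ → R
  | _, 0 => 1
  | [], _ + 1 => 0
  | x :: l, d + 1 => elemSymm l (d + 1) + x * elemSymm l d

/-- The ideal of `(ZMod 2)[x_1, …, x_k]` generated by the complete homogeneous
symmetric polynomials `h_{m+i}(x_1, …, x_{k+1-i})` for `1 ≤ i ≤ k`. -/
noncomputable def flagIdeal (k m : ℕ) : Ideal (MvPolynomial (Fin k) (ZMod 2)) :=
  Ideal.span { p | ∃ i : ℕ, 1 ≤ i ∧ i ≤ k ∧
    p = completeHomog (((List.finRange k).take (k + 1 - i)).map MvPolynomial.X) (m + i) }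

/-- `R(k,m)`, the quotient of `(ZMod 2)[x_1, …, x_k]` by `flagIdeal k m`;
this is the mod-2 cohomology ring of the real flag manifold `F(1^k, m)`. -/
abbrev FlagRing (k m : ℕ) : Type :=
  MvPolynomial (Fin k) (ZMod 2) ⧸ flagIdeal k m

/-- The image of the variable `x_{j+1}` in `R(k,m)` (`j` is 0-indexed). -/
noncomputable def xGen (k m : ℕ) (j : Fin k) : FlagRing k m :=
  Ideal.Quotient.mk (flagIdeal k m) (MvPolynomial.X j)

/-- The zero-divisor `z_{j+1} = x_{j+1} ⊗ 1 + 1 ⊗ x_{j+1}` in `R(k,m) ⊗ R(k,m)`. -/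
noncomputable def zGen (k m : ℕ) (j : Fin k) :
    FlagRing k m ⊗[ZMod 2] FlagRing k m :=
  xGen k m j ⊗ₜ 1 + 1 ⊗ₜ xGen k m j

/-- `x_{i+1,j+1}` in the `s`-fold tensor power `R(k,m)^{⊗ s}`: the element having
`x_{j+1}` in the `(i+1)`-st tensor factor and `1` elsewhere (`i`, `j` 0-indexed). -/
noncomputable def xT (k m s : ℕ) (i : Fin s) (j : Fin k) :
    ⨂[ZMod 2] _ : Fin s, FlagRing k m :=
  PiTensorProduct.tprod (ZMod 2) (fun t => if t = i then xGen k m j else 1)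

/-- The `s`-th zero-divisor `z_{i+1,j+1} = x_{1,j+1} + x_{i+1,j+1}` in `R(k,m)^{⊗ s}`. -/
noncomputable def zT (k m s : ℕ) (hs : 0 < s) (i : Fin s) (j : Fin k) :
    ⨂[ZMod 2] _ : Fin s, FlagRing k m :=
  xT k m s ⟨0, hs⟩ j + xT k m s i j

/-! ### Complete homogeneous polynomials of lists -/

lemma completeHomog_zero {R : Type*} [CommSemiring R] (l : List R) : completeHomog l 0 = 1 := by
  induction l with
  | nil => rfl
  | cons x l ih => simp [completeHomog, ih]

lemma completeHomog_append {R : Type*} [CommSemiring R] (l : List R) (x : R) (d : ℕ) :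
    completeHomog (l ++ [x]) (d + 1)
      = x * completeHomog (l ++ [x]) d + completeHomog l (d + 1) := by
  induction l generalizing d with
  | nil =>
    have h (d : ℕ) : completeHomog [x] d = x ^ d := by
      rw [completeHomog, Finset.sum_range_succ, Finset.sum_eq_zero]
      · simp [completeHomog]
      · intro t ht
        obtain ⟨c, hc⟩ : ∃ c, d - t = c + 1 := ⟨d - t - 1, by have := Finset.mem_range.1 ht; omega⟩
        simp [hc, completeHomog]
    simp [h, completeHomog, pow_succ']
  | cons y l ih =>
    simp only [List.cons_append, completeHomog]
    rw [Finset.sum_range_succ, Finset.sum_range_succ (n := d + 1), Finset.mul_sum, ← add_assoc,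
      ← Finset.sum_add_distrib]
    simp only [Nat.sub_self, completeHomog_zero]
    congr 1
    refine Finset.sum_congr rfl fun t ht => ?_
    have : d + 1 - t = (d - t) + 1 := by have := Finset.mem_range.1 ht; omega
    rw [this, ih]
    ring

lemma map_completeHomog {R S : Type*} [CommSemiring R] [CommSemiring S] (f : R →+* S)
    (l : List R) (d : ℕ) : f (completeHomog l d) = completeHomog (l.map f) d := by
  induction l generalizing d with
  | nil => cases d <;> simp [completeHomog]
  | cons x l ih => simp [completeHomog, ih]

lemma mul_completeHomog_of_kill {R : Type*} [CommSemiring R] (P : R) (l : List R)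
    (h : ∀ y ∈ l, P * y = 0) (d : ℕ) : P * completeHomog l (d + 1) = 0 := by
  induction l generalizing d with
  | nil => simp [completeHomog]
  | cons y l ih =>
    rw [completeHomog, Finset.mul_sum]
    refine Finset.sum_eq_zero fun t _ => ?_
    rcases t with _ | t
    · simpa using ih (fun z hz => h z (by simp [hz])) d
    · rw [pow_succ', ← mul_assoc, ← mul_assoc, h y (by simp)]
      simp

lemma mul_completeHomog_append_of_kill {R : Type*} [CommSemiring R] (P : R) (l : List R) (x : R)
    (h : ∀ y ∈ l, P * y = 0) (d : ℕ) : P * completeHomog (l ++ [x]) d = P * x ^ d := by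
  induction d with
  | zero => simp [completeHomog_zero]
  | succ d ih =>
    rw [completeHomog_append, mul_add, mul_completeHomog_of_kill P l h, mul_left_comm, ih]
    ring

open Polynomial in
lemma completeHomog_monic {R : Type*} [CommRing R] [Nontrivial R] (l : List R) (d : ℕ) :
    (completeHomog (l.map C ++ [(X)]) d : R[X]).Monic ∧
      (completeHomog (l.map C ++ [(X)]) d : R[X]).natDegree = d := by
  induction d with
  | zero => simp [completeHomog_zero]
  | succ d ih =>
    obtain ⟨hm, hd⟩ := ih
    rw [completeHomog_append, ← map_completeHomog]
    have hXd : (X * completeHomog (l.map C ++ [(X)]) d : R[X]).natDegree = d + 1 := by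
      rw [natDegree_X_mul hm.ne_zero, hd]
    have hXm : (X * completeHomog (l.map C ++ [(X)]) d : R[X]).Monic := monic_X.mul hm
    constructor
    · refine hXm.add_of_left (lt_of_le_of_lt degree_C_le ?_)
      rw [degree_eq_natDegree hXm.ne_zero, hXd]
      exact_mod_cast Nat.succ_pos d
    · rw [natDegree_add_C, hXd]

/-! ### A ring in which the top monomial survives -/

open Polynomial in
/-- Successive adjunction of roots gives a ring satisfying the flag relations in which the top
monomial is nonzero. -/
lemma exists_model (n k : ℕ) (hk : k ≤ n) :
    ∃ (S : Type) (_ : CommRing S) (_ : Algebra (ZMod 2) S) (x : ℕ → S),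
      (∀ j < k, completeHomog ((List.range (j + 1)).map x) (n - j) = 0) ∧
      ∏ j ∈ Finset.range k, x j ^ (n - j - 1) ≠ 0 := by
  induction k with
  | zero => exact ⟨ZMod 2, inferInstance, inferInstance, fun _ => 0, by simp, by simp⟩
  | succ k ih =>
    obtain ⟨S, _, _, x, hx, htop⟩ := ih (by omega)
    have : Nontrivial S := ⟨⟨_, _, htop⟩⟩
    let p : S[X] := completeHomog (((List.range k).map x).map C ++ [(X)]) (n - k)
    obtain ⟨hm, hd⟩ : p.Monic ∧ p.natDegree = n - k := completeHomog_monic _ _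
    let x' : ℕ → AdjoinRoot p := fun i => if i < k then AdjoinRoot.of p (x i) else AdjoinRoot.root p
    have hlist (j : ℕ) (hj : j ≤ k) :
        (List.range j).map x' = ((List.range j).map x).map (AdjoinRoot.of p) := by
      rw [List.map_map]
      refine List.map_congr_left fun i hi => ?_
      have : i < k := (List.mem_range.1 hi).trans_le hj
      simp [x', this]
    refine ⟨AdjoinRoot p, inferInstance, inferInstance, x', fun j hj => ?_, ?_⟩
    · rcases Nat.lt_succ_iff_lt_or_eq.1 hj with hj | rfl
      · rw [hlist _ hj, ← map_completeHomog, hx j hj, map_zero]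
      · have h0 : AdjoinRoot.mk p p = 0 := AdjoinRoot.mk_self
        conv_lhs at h0 => arg 2; simp only [p]
        rw [map_completeHomog] at h0
        rw [List.range_succ, List.map_append, hlist _ le_rfl]
        rw [List.map_append, List.map_map] at h0
        convert h0 using 3
        · rfl
        · simp [x']
    · have hprod : ∏ j ∈ Finset.range (k + 1), x' j ^ (n - j - 1)
          = AdjoinRoot.mk p
            (C (∏ j ∈ Finset.range k, x j ^ (n - j - 1)) * X ^ (n - k - 1)) := by
        rw [Finset.prod_range_succ, map_mul, map_pow, AdjoinRoot.mk_X, AdjoinRoot.mk_C, map_prod]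
        congr 1
        · refine Finset.prod_congr rfl fun i hi => ?_
          simp [x', Finset.mem_range.1 hi]
        · simp [x']
      rw [hprod]
      refine AdjoinRoot.mk_ne_zero_of_natDegree_lt hm ?_ ?_
      · rw [C_mul_X_pow_eq_monomial]
        simpa using htop
      · refine (natDegree_C_mul_X_pow_le _ _).trans_lt ?_
        omega

/-! ### Vanishing above the top degree -/

/-- `P_j = ∏_{i<j} x_i ^ (n-i-1)` annihilates `x_0, …, x_{j-1}`. -/
lemma prefix_kill {S : Type*} [CommRing S] (n k : ℕ) (hk : k ≤ n) (x : ℕ → S)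
    (hx : ∀ j < k, completeHomog ((List.range (j + 1)).map x) (n - j) = 0) (j : ℕ) (hj : j ≤ k) :
    ∀ i < j, (∏ i ∈ Finset.range j, x i ^ (n - i - 1)) * x i = 0 := by
  induction j with
  | zero => simp
  | succ j ih =>
    intro i hi
    rw [Finset.prod_range_succ]
    rcases Nat.lt_succ_iff_lt_or_eq.1 hi with hi | rfl
    · rw [mul_right_comm, ih (by omega) i hi, zero_mul]
    · have h := mul_completeHomog_append_of_kill (∏ a ∈ Finset.range i, x a ^ (n - a - 1))
        ((List.range i).map x) (x i) (by simpa using ih (by omega)) (n - i)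
      have h2 := hx i (by omega)
      rw [List.range_succ, List.map_append, List.map_singleton] at h2
      rw [h2, mul_zero] at h
      rw [mul_assoc, ← pow_succ, show n - i - 1 + 1 = n - i by omega, ← h]

lemma prefix_mul_pow {S : Type*} [CommRing S] (n k : ℕ) (hk : k ≤ n) (x : ℕ → S)
    (hx : ∀ j < k, completeHomog ((List.range (j + 1)).map x) (n - j) = 0) (j : ℕ) (hj : j < k) :
    (∏ i ∈ Finset.range j, x i ^ (n - i - 1)) * x j ^ (n - j - 1 + 1) = 0 := by
  have h := prefix_kill n k hk x hx (j + 1) hj j (by omega)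
  rwa [Finset.prod_range_succ, mul_assoc, ← pow_succ] at h

/-! ### The computation in the tensor square -/

lemma add_pow_two_pow_of_two_eq_zero {T : Type*} [CommRing T] (h2 : (2 : T) = 0) (u v : T)
    (e : ℕ) : (u + v) ^ 2 ^ e = u ^ 2 ^ e + v ^ 2 ^ e := by
  induction e with
  | zero => simp
  | succ e ih =>
    rw [pow_succ, pow_mul, pow_mul, pow_mul, ih]
    linear_combination u ^ 2 ^ e * v ^ 2 ^ e * h2

lemma mul_add_pow_of_kill {T : Type*} [CommRing T] (Q u v : T) (h : Q * v = 0) (a : ℕ) :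
    Q * (u + v) ^ a = Q * u ^ a := by
  induction a with
  | zero => simp
  | succ a ih =>
    rw [pow_succ, pow_succ]
    linear_combination (u + v) * ih + u ^ a * h

/-- Only the term `u ^ N * v ^ N` survives when `Q` kills `u ^ (N+1)` and `v ^ (N+1)`. -/
lemma local_step {T : Type*} [CommRing T] (Q u v : T) (m N : ℕ) (hm : 1 ≤ m) (hN : m ≤ N)
    (hadd : (u + v) ^ m = u ^ m + v ^ m)
    (hu : Q * u ^ (N + 1) = 0) (hv : Q * v ^ (N + 1) = 0) :
    Q * (u ^ (N - m + 1) * v ^ (N - m) * (u + v) ^ (2 * m - 1)) = Q * (u ^ N * v ^ N) := by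
  obtain ⟨a, rfl⟩ := Nat.exists_eq_add_of_le' hm
  obtain ⟨b, rfl⟩ := Nat.exists_eq_add_of_le hN
  have h := mul_add_pow_of_kill (Q * v ^ (a + 1 + b)) u v (by rw [mul_assoc, ← pow_succ, hv]) a
  rw [show 2 * (a + 1) - 1 = (a + 1) + a by omega, Nat.add_sub_cancel_left, pow_add (u + v), hadd]
  linear_combination v ^ b * (u + v) ^ a * hu + u ^ (b + 1) * h

open Finset in
lemma core_ne_zero (S : Type) [CommRing S] [Algebra (ZMod 2) S] (k e : ℕ) (x : ℕ → S)
    (hx : ∀ j < k, completeHomog ((List.range (j + 1)).map x) (2 ^ e + k - j) = 0)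
    (htop : ∏ j ∈ range k, x j ^ (2 ^ e + k - j - 1) ≠ 0) :
    ∏ j ∈ range k, (x j ⊗ₜ[ZMod 2] (1 : S) + (1 : S) ⊗ₜ[ZMod 2] x j) ^ (2 * 2 ^ e - 1) ≠ 0 := by
  set n := 2 ^ e + k with hn
  have h2 : (2 : S ⊗[ZMod 2] S) = 0 := by
    have := map_ofNat (algebraMap (ZMod 2) (S ⊗[ZMod 2] S)) 2
    rw [← this, show (OfNat.ofNat 2 : ZMod 2) = 0 from rfl, map_zero]
  let u : ℕ → S ⊗[ZMod 2] S := fun j => x j ⊗ₜ 1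
  let v : ℕ → S ⊗[ZMod 2] S := fun j => 1 ⊗ₜ x j
  let N : ℕ → ℕ := fun j => n - j - 1
  have hu (j : ℕ) : ∏ i ∈ range j, u i ^ N i = (∏ i ∈ range j, x i ^ N i) ⊗ₜ[ZMod 2] (1 : S) := by
    have := map_prod (Algebra.TensorProduct.includeLeft : S →ₐ[ZMod 2] S ⊗[ZMod 2] S)
      (fun i => x i ^ N i) (range j)
    simp only [map_pow, Algebra.TensorProduct.includeLeft_apply] at this
    exact this.symm
  have hv (j : ℕ) : ∏ i ∈ range j, v i ^ N i = (1 : S) ⊗ₜ[ZMod 2] (∏ i ∈ range j, x i ^ N i) := by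
    have := map_prod (Algebra.TensorProduct.includeRight : S →ₐ[ZMod 2] S ⊗[ZMod 2] S)
      (fun i => x i ^ N i) (range j)
    simp only [map_pow, Algebra.TensorProduct.includeRight_apply] at this
    exact this.symm
  have key (j : ℕ) (hj : j ≤ k) :
      ∏ i ∈ range j, (u i ^ (N i - 2 ^ e + 1) * v i ^ (N i - 2 ^ e)
        * (u i + v i) ^ (2 * 2 ^ e - 1)) = ∏ i ∈ range j, (u i ^ N i * v i ^ N i) := by
    induction j with
    | zero => simp
    | succ j ih =>
      rw [prod_range_succ, prod_range_succ, ih (by omega)]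
      have hk := prefix_mul_pow n k (Nat.le_add_left _ _) x hx j hj
      refine local_step _ _ _ _ _ Nat.one_le_two_pow (by simp only [N]; omega)
        (add_pow_two_pow_of_two_eq_zero h2 _ _ _) ?_ ?_
      · rw [prod_mul_distrib, mul_right_comm, hu, Algebra.TensorProduct.tmul_pow,
          Algebra.TensorProduct.tmul_mul_tmul, hk, TensorProduct.zero_tmul, zero_mul]
      · rw [prod_mul_distrib, mul_assoc, hv, Algebra.TensorProduct.tmul_pow,
          Algebra.TensorProduct.tmul_mul_tmul, hk, TensorProduct.tmul_zero, mul_zero]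
  intro h0
  have h := key k le_rfl
  rw [prod_mul_distrib, h0, mul_zero, prod_mul_distrib, hu, hv,
    Algebra.TensorProduct.tmul_mul_tmul, one_mul, mul_one] at h
  -- Over a field, functionals separate points, so the tensor square of a nonzero vector is nonzero.
  refine htop ((Module.forall_dual_apply_eq_zero_iff (ZMod 2) _).1 fun φ => ?_)
  have hsq := congrArg (LinearMap.mul' (ZMod 2) (ZMod 2) ∘ₗ TensorProduct.map φ φ) h
  simpa using hsq.symm

/-- for `k ≥ 1` and `e ≥ 0`, `(z_1 z_2 ⋯ z_k)^{2^{e+1}-1} ≠ 0` in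
`R(k, 2^e) ⊗ R(k, 2^e)`. -/
theorem statement7 (k e : ℕ) (hk : 1 ≤ k) :
    (∏ j : Fin k, zGen k (2 ^ e) j) ^ (2 ^ (e + 1) - 1) ≠ 0 := by
  obtain ⟨S, _, _, x, hx, htop⟩ := exists_model (2 ^ e + k) k (Nat.le_add_left _ _)
  let g : MvPolynomial (Fin k) (ZMod 2) →ₐ[ZMod 2] S := MvPolynomial.aeval fun j => x j
  have hg : ∀ a ∈ flagIdeal k (2 ^ e), g a = 0 := by
    intro a ha
    have hle : flagIdeal k (2 ^ e) ≤ RingHom.ker (g : _ →+* S) := by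
      refine Ideal.span_le.2 ?_
      rintro _ ⟨i, hi1, hik, rfl⟩
      have hlist : (((List.finRange k).take (k + 1 - i)).map
          (MvPolynomial.X : Fin k → MvPolynomial (Fin k) (ZMod 2))).map (g : _ →+* S)
          = (List.range (k - i + 1)).map x := by
        refine List.ext_getElem (by simp; omega) fun a h1 h2 => ?_
        simp [g]
      rw [SetLike.mem_coe, RingHom.mem_ker, map_completeHomog, hlist,
        ← hx (k - i) (by omega)]
      congr 1
      generalize 2 ^ e = m
      omega
    exact hle ha
  let f : FlagRing k (2 ^ e) →ₐ[ZMod 2] S := Ideal.Quotient.liftₐ _ g hg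
  have hf (j : Fin k) : f (xGen k (2 ^ e) j) = x j := by
    change g (MvPolynomial.X j) = x j
    simp [g]
  intro h0
  apply core_ne_zero S k e x hx htop
  have h1 := congrArg (Algebra.TensorProduct.map f f) h0
  rw [map_zero, map_pow, map_prod, ← Finset.prod_pow] at h1
  rw [← h1, ← Fin.prod_univ_eq_prod_range
    (fun j => (x j ⊗ₜ[ZMod 2] (1 : S) + (1 : S) ⊗ₜ[ZMod 2] x j) ^ (2 * 2 ^ e - 1)) k]
  refine Finset.prod_congr rfl fun j _ => ?_
  simp [zGen, hf, pow_succ' 2 e]
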